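/- arXiv:1502.02291 — 3 statements merged into one kernel-verified Lean document; each statement's English description precedes it below -/
import Mathlib

section
/- Let H be a separable real Hilbert space with Hilbert basis (e_i)_{i∈ℕ}. For a unit vector u ∈ H let u⊗u denote the rank-one operator x ↦ ⟨u, x⟩ u (the orthogonal projection onto the span of u). Then for any unit vectors u, v ∈ H: ∑_i ‖(v⊗v − u⊗u) e_i‖² = ‖v − u‖² · (1 + ⟨v, u⟩). In particular, if ⟨v, u⟩ ≥ 0 then ‖v − u‖² ≤ ∑_i ‖(v⊗v − u⊗u) e_i‖². -/
/-!
Since `u` and `v` are unit vectors, expanding the square and summing over the basis with Parseval's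
identity (`HilbertBasis.hasSum_inner_mul_inner`) gives `2 - 2 * ⟪v, u⟫ ^ 2`. This factors as
`(2 - 2 * ⟪v, u⟫) * (1 + ⟪v, u⟫)`, whose first factor is `‖v - u‖ ^ 2`.
-/

open scoped RealInnerProductSpace

/-- The rank-one operator `u ⊗ u : x ↦ ⟨u, x⟩ u`. -/
noncomputable def rankOneProj {H : Type*} [NormedAddCommGroup H] [InnerProductSpace ℝ H]
    (u : H) : H →L[ℝ] H := (innerSL ℝ u).smulRight u

/-- Hilbert–Schmidt distance between two rank-one orthogonal
projections in terms of the distance between the defining unit vectors. -/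
theorem hs_dist_rankOneProj
    {H : Type*} [NormedAddCommGroup H] [InnerProductSpace ℝ H] [CompleteSpace H]
    (e : HilbertBasis ℕ ℝ H) (u v : H) (hu : ‖u‖ = 1) (hv : ‖v‖ = 1) :
    (∑' i : ℕ, ‖(rankOneProj v - rankOneProj u) (e i)‖ ^ 2
      = ‖v - u‖ ^ 2 * (1 + ⟪v, u⟫)) ∧
    (0 ≤ ⟪v, u⟫ →
      ‖v - u‖ ^ 2 ≤ ∑' i : ℕ, ‖(rankOneProj v - rankOneProj u) (e i)‖ ^ 2) := by
  -- The termwise expansion of the squared norm, in a form summed by Parseval.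
  have hterm (i : ℕ) : ‖(rankOneProj v - rankOneProj u) (e i)‖ ^ 2
      = ⟪v, e i⟫ * ⟪e i, v⟫ + ⟪u, e i⟫ * ⟪e i, u⟫ - 2 * ⟪v, u⟫ * (⟪v, e i⟫ * ⟪e i, u⟫) := by
    have happ : (rankOneProj v - rankOneProj u) (e i) = ⟪v, e i⟫ • v - ⟪u, e i⟫ • u := by
      simp [rankOneProj]
    rw [happ, norm_sub_sq_real, norm_smul, norm_smul, hu, hv, real_inner_smul_left,
      real_inner_smul_right, mul_one, mul_one, Real.norm_eq_abs, Real.norm_eq_abs, sq_abs, sq_abs,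
      real_inner_comm v (e i), real_inner_comm u (e i)]
    ring
  have hsum : HasSum (fun i : ℕ => ‖(rankOneProj v - rankOneProj u) (e i)‖ ^ 2)
      (⟪v, v⟫ + ⟪u, u⟫ - 2 * ⟪v, u⟫ * ⟪v, u⟫) := by
    simp_rw [hterm]
    exact ((e.hasSum_inner_mul_inner v v).add (e.hasSum_inner_mul_inner u u)).sub
      ((e.hasSum_inner_mul_inner v u).mul_left _)
  have heq : ∑' i : ℕ, ‖(rankOneProj v - rankOneProj u) (e i)‖ ^ 2
      = ‖v - u‖ ^ 2 * (1 + ⟪v, u⟫) := by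
    rw [hsum.tsum_eq, norm_sub_sq_real, real_inner_self_eq_norm_sq, real_inner_self_eq_norm_sq,
      hu, hv]
    ring
  refine ⟨heq, fun h => ?_⟩
  rw [heq]
  exact le_mul_of_one_le_right (sq_nonneg _) (by linarith)
end

section
/- Let H be a separable Hilbert space, let (P_k)_{k∈ℕ} be orthogonal projections on H that are pairwise orthogonal (P_j ∘ P_k = 0 for j ≠ k), and let (λ_k)_{k∈ℕ} be real numbers such that for each k, inf_{j≠k} |λ_j − λ_k| > 0. For each k let Q_k be the bounded operator defined by Q_k x = ∑_{j≠k} (λ_j − λ_k)^{-1} P_j x. Let N be any bounded operator on H, let m ∈ ℕ, and let Π_m = ∑_{k=1}^m P_k. Then ∑_{k=1}^m (P_k ∘ N ∘ Q_k + Q_k ∘ N ∘ P_k) = ∑_{k=1}^m (P_k ∘ N ∘ Q_k ∘ (I − Π_m) + (I − Π_m) ∘ Q_k ∘ N ∘ P_k); that is, in the partial sum all terms P_k N P_j and P_j N P_k with both indices j, k ≤ m cancel, leaving only the cross terms with one index ≤ m and the other > m. -/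
/-!
The resolvent acts on each eigenspace by a scalar: with `c j k = (lam j - lam k)⁻¹` for `j ≠ k` and
`c k k = 0`, one has `Q k * P j = c j k • P j` and `P j * Q k = c j k • P j`. The two sides of the
claimed identity therefore differ by `∑ k < m, ∑ j < m, c j k • (P k * N * P j + P j * N * P k)`,
which vanishes because `c` is antisymmetric.

The first scalar identity is a one-term sum. The second does not need convergence of the series
defining `Q k`: both sides are continuous and agree on every range of `P i` and on the common
kernel of the `P i`, and these together span a dense subspace.
-/

section

variable {H : Type*} [NormedAddCommGroup H] [InnerProductSpace ℝ H]

/-- The coefficient of `P j` in the reduced resolvent at `lam k`. -/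
noncomputable def resolventCoeff (lam : ℕ → ℝ) (j k : ℕ) : ℝ :=
  if j = k then 0 else (lam j - lam k)⁻¹

theorem resolventCoeff_antisymm (lam : ℕ → ℝ) (j k : ℕ) :
    resolventCoeff lam k j = -resolventCoeff lam j k := by
  unfold resolventCoeff
  by_cases h : j = k
  · simp [h]
  · rw [if_neg h, if_neg (Ne.symm h), ← inv_neg, neg_sub]

/-- Two bounded operators agree if they agree on the range of each self-adjoint idempotent `P i`
and on the common kernel of the `P i`: the orthogonal complement of their equalizer lies in that
common kernel, hence in the equalizer itself. -/
theorem eq_of_comp_projections [CompleteSpace H] {P : ℕ → H →L[ℝ] H}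
    (hproj : ∀ k, P k * P k = P k ∧ ContinuousLinearMap.adjoint (P k) = P k)
    {A B : H →L[ℝ] H} (hrange : ∀ i, A * P i = B * P i)
    (hker : ∀ x, (∀ i, P i x = 0) → A x = B x) : A = B := by
  let K : Submodule ℝ H := (A - B).ker
  have hmem : ∀ x, x ∈ K ↔ A x = B x := fun x => by
    simp [K, LinearMap.mem_ker, sub_eq_zero]
  have hclosed : IsClosed (K : Set H) := (A - B).isClosed_ker
  have : CompleteSpace K := hclosed.completeSpace_coe
  have hperp : Kᗮ = ⊥ := by
    refine (Submodule.eq_bot_iff _).2 fun x hx => ?_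
    have hPx : ∀ i, P i x = 0 := fun i => by
      have hin : P i (P i x) ∈ K := (hmem _).2 (congrArg (fun T => T (P i x)) (hrange i))
      have h0 := Submodule.inner_left_of_mem_orthogonal hin hx
      rw [← ContinuousLinearMap.adjoint_inner_left, (hproj i).2] at h0
      exact inner_self_eq_zero.1 h0
    have hxK : x ∈ K := (hmem x).2 (hker x hPx)
    exact inner_self_eq_zero.1 (Submodule.inner_left_of_mem_orthogonal hxK hx)
  have htop : K = ⊤ := (Submodule.orthogonal_eq_bot_iff).1 hperp
  ext x
  exact (hmem x).1 (htop ▸ Submodule.mem_top)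

theorem resolvent_mul_projection {P : ℕ → H →L[ℝ] H}
    (hidem : ∀ k, P k * P k = P k) (horth : ∀ j k, j ≠ k → P j * P k = 0)
    {lam : ℕ → ℝ} {Q : ℕ → H →L[ℝ] H}
    (hQ : ∀ k (x : H), Q k x = ∑' j : ℕ, resolventCoeff lam j k • P j x) (j k : ℕ) :
    Q k * P j = resolventCoeff lam j k • P j := by
  ext x
  rw [ContinuousLinearMap.mul_apply, hQ, tsum_eq_single j]
  · rw [← ContinuousLinearMap.mul_apply, hidem]
    rfl
  · intro i hij
    rw [← ContinuousLinearMap.mul_apply, horth i j hij]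
    simp

theorem projection_mul_resolvent [CompleteSpace H] {P : ℕ → H →L[ℝ] H}
    (hproj : ∀ k, P k * P k = P k ∧ ContinuousLinearMap.adjoint (P k) = P k)
    (horth : ∀ j k, j ≠ k → P j * P k = 0)
    {lam : ℕ → ℝ} {Q : ℕ → H →L[ℝ] H}
    (hQ : ∀ k (x : H), Q k x = ∑' j : ℕ, resolventCoeff lam j k • P j x) (j k : ℕ) :
    P j * Q k = resolventCoeff lam j k • P j := by
  refine eq_of_comp_projections hproj (fun i => ?_) (fun x hx => ?_)
  · rw [mul_assoc, resolvent_mul_projection (fun k => (hproj k).1) horth hQ, mul_smul_comm,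
      smul_mul_assoc]
    by_cases h : j = i
    · rw [h]
    · rw [horth j i h, smul_zero, smul_zero]
  · simp [hQ, hx]

end


/-- telescoping cancellation in the partial sums
`∑_{k<m} (Pₖ N Qₖ + Qₖ N Pₖ)`: all terms with both indices below `m`
cancel, leaving only the cross terms through `I − Π_m`. -/
theorem cumulative_eigenprojection_telescoping
    {H : Type*} [NormedAddCommGroup H] [InnerProductSpace ℝ H] [CompleteSpace H]
    (P : ℕ → H →L[ℝ] H)
    (hproj : ∀ k, P k * P k = P k ∧ ContinuousLinearMap.adjoint (P k) = P k)
    (horth : ∀ j k, j ≠ k → P j * P k = 0)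
    (lam : ℕ → ℝ)
    (hgap : ∀ k, ∃ δ > (0 : ℝ), ∀ j, j ≠ k → δ ≤ |lam j - lam k|)
    (Q : ℕ → H →L[ℝ] H)
    (hQ : ∀ k (x : H),
      Q k x = ∑' j : ℕ, (if j = k then (0 : ℝ) else (lam j - lam k)⁻¹) • P j x)
    (N : H →L[ℝ] H) (m : ℕ) :
    ∑ k ∈ Finset.range m, (P k * N * Q k + Q k * N * P k)
      = ∑ k ∈ Finset.range m,
          (P k * N * Q k * (1 - ∑ j ∈ Finset.range m, P j)
            + (1 - ∑ j ∈ Finset.range m, P j) * Q k * N * P k) := by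
  have hQ' : ∀ k (x : H), Q k x = ∑' j : ℕ, resolventCoeff lam j k • P j x := hQ
  have hQP := resolvent_mul_projection (fun k => (hproj k).1) horth hQ'
  have hPQ := projection_mul_resolvent hproj horth hQ'
  have hR : ∀ k, P k * N * Q k * ∑ j ∈ Finset.range m, P j
      = ∑ j ∈ Finset.range m, resolventCoeff lam j k • (P k * N * P j) := fun k => by
    rw [Finset.mul_sum]
    exact Finset.sum_congr rfl fun j _ => by rw [mul_assoc, hQP, mul_smul_comm]
  have hL : ∀ k, (∑ j ∈ Finset.range m, P j) * Q k * N * P k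
      = ∑ j ∈ Finset.range m, resolventCoeff lam j k • (P j * N * P k) := fun k => by
    simp only [Finset.sum_mul, hPQ, smul_mul_assoc]
  have hcancel : ∑ k ∈ Finset.range m, (P k * N * Q k * ∑ j ∈ Finset.range m, P j)
      + ∑ k ∈ Finset.range m, ((∑ j ∈ Finset.range m, P j) * Q k * N * P k) = 0 := by
    simp only [hR, hL]
    -- Exchanging the two indices in the first double sum turns it into minus the second.
    rw [Finset.sum_comm, ← Finset.sum_add_distrib]
    refine Finset.sum_eq_zero fun j _ => ?_
    rw [← Finset.sum_add_distrib]
    refine Finset.sum_eq_zero fun k _ => ?_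
    rw [resolventCoeff_antisymm lam j k, neg_smul, add_neg_cancel]
  rw [← sub_eq_zero, ← Finset.sum_sub_distrib, ← hcancel, ← Finset.sum_add_distrib]
  refine Finset.sum_congr rfl fun k _ => ?_
  simp only [mul_sub, sub_mul, mul_one, one_mul]
  abel
end

section
/- Let (ρ_{jk})_{j,k∈ℕ} be real numbers with ∑_{j,k} ρ_{jk}² < ∞, and let (λ_{1j})_{j∈ℕ} and (λ_{2k})_{k∈ℕ} be strictly positive reals. For α > 0 define c_{jk}(α) = ρ_{jk} · √(λ_{1j} λ_{2k}) / √((λ_{1j} + α)(λ_{2k} + α)). Then ∑_{j,k} (c_{jk}(α) − ρ_{jk})² → 0 as α → 0⁺. -/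
/-!
Each coefficient is `ρ_{jk}` times a damping factor `√(λ_{1j} λ_{2k}) / √((λ_{1j} + α)(λ_{2k} + α))`
which lies in `[0, 1]` for `α ≥ 0` and is continuous in `α` at `0` with value `1`, because the
eigenvalues are strictly positive. Hence every summand tends to `0` and is bounded by the summable
sequence `ρ_{jk}²`, and Tannery's theorem (dominated convergence for series) gives the limit.
-/

/-- the matrix coefficients of the Tikhonov-regularized
cross-correlation operator converge in Hilbert–Schmidt norm to the target
coefficients `ρ_{jk}` as the regularization parameter `α → 0⁺`. -/
theorem tikhonov_coefficients_tendsto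
    (ρ : ℕ × ℕ → ℝ) (hρ : Summable (fun jk => (ρ jk) ^ 2))
    (l1 l2 : ℕ → ℝ) (hl1 : ∀ j, 0 < l1 j) (hl2 : ∀ k, 0 < l2 k) :
    Filter.Tendsto
      (fun α : ℝ => ∑' jk : ℕ × ℕ,
        (ρ jk * Real.sqrt (l1 jk.1 * l2 jk.2) /
            Real.sqrt ((l1 jk.1 + α) * (l2 jk.2 + α)) - ρ jk) ^ 2)
      (nhdsWithin 0 (Set.Ioi 0)) (nhds 0) := by
  suffices h : Filter.Tendsto _ (nhdsWithin (0 : ℝ) (Set.Ioi 0))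
      (nhds (∑' _ : ℕ × ℕ, (0 : ℝ))) by
    rwa [tsum_zero] at h
  refine tendsto_tsum_of_dominated_convergence hρ ?_ ?_
  · rintro ⟨j, k⟩
    have hs : Real.sqrt (l1 j * l2 k) ≠ 0 :=
      (Real.sqrt_pos.2 (mul_pos (hl1 j) (hl2 k))).ne'
    have hc : ContinuousAt (fun α : ℝ => (ρ (j, k) * Real.sqrt (l1 j * l2 k) /
        Real.sqrt ((l1 j + α) * (l2 k + α)) - ρ (j, k)) ^ 2) 0 := by
      refine ((ContinuousAt.div (by fun_prop) (by fun_prop) ?_).sub continuousAt_const).pow 2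
      simpa only [add_zero] using hs
    have h := hc.tendsto.mono_left (nhdsWithin_le_nhds (s := Set.Ioi 0))
    simpa only [add_zero, mul_div_cancel_right₀ _ hs, sub_self, ne_eq, OfNat.ofNat_ne_zero,
      not_false_eq_true, zero_pow] using h
  · filter_upwards [self_mem_nhdsWithin] with α hα jk
    have hα' : (0 : ℝ) ≤ α := le_of_lt hα
    have h1 := hl1 jk.1
    have h2 := hl2 jk.2
    have ht0 : 0 ≤ Real.sqrt (l1 jk.1 * l2 jk.2) /
        Real.sqrt ((l1 jk.1 + α) * (l2 jk.2 + α)) := by positivity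
    have ht1 : Real.sqrt (l1 jk.1 * l2 jk.2) /
        Real.sqrt ((l1 jk.1 + α) * (l2 jk.2 + α)) ≤ 1 := by
      refine div_le_one_of_le₀ (Real.sqrt_le_sqrt ?_) (Real.sqrt_nonneg _)
      gcongr <;> linarith
    rw [Real.norm_of_nonneg (sq_nonneg _), mul_div_assoc]
    generalize Real.sqrt (l1 jk.1 * l2 jk.2) /
        Real.sqrt ((l1 jk.1 + α) * (l2 jk.2 + α)) = t at ht0 ht1
    calc (ρ jk * t - ρ jk) ^ 2 = ρ jk ^ 2 * (1 - t) ^ 2 := by ring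
      _ ≤ ρ jk ^ 2 * 1 := by
        gcongr
        exact pow_le_one₀ (by linarith) (by linarith)
      _ = ρ jk ^ 2 := mul_one _
end
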